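/- In ℝ⁵ with the standard Euclidean inner product, let S be the set of four vectors (-2/3,-2/3,4/3,1/2,-1/2), (4/3,-2/3,-2/3,-1/2,1/2), (1/3,1/3,-2/3,-1/2,1/2), (-2/3,4/3,-2/3,-1/2,1/2). Then the minimum of ‖x‖² over x in the convex hull of S equals 1/24, and it is attained at the point β₆ = (-1/24,-1/24,1/12,-1/8,1/8). -/

import Mathlib

/-- A vector in `ℝ⁵` with the standard Euclidean inner product. -/
noncomputable def vec5 (a b c d e : ℝ) : EuclideanSpace ℝ (Fin 5) :=
  (WithLp.equiv 2 (Fin 5 → ℝ)).symm ![a, b, c, d, e]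

/-- Table (2.3) for `(GL(3)×GL(2), Sym²k³⊗k²)`: the minimum of `‖x‖²` over the
convex hull of the listed weight vectors equals `1/24`, attained at
`β₆ = ((-1/24) (-1/24) (1/12) (-1/8) (1/8))`. -/
theorem minsq_of_convexHull_weights :
    let S : Set (EuclideanSpace ℝ (Fin 5)) :=
      {vec5 (-2/3) (-2/3) (4/3) (1/2) (-1/2),
       vec5 (4/3) (-2/3) (-2/3) (-1/2) (1/2),
       vec5 (1/3) (1/3) (-2/3) (-1/2) (1/2),
       vec5 (-2/3) (4/3) (-2/3) (-1/2) (1/2)}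
    let β : EuclideanSpace ℝ (Fin 5) := vec5 (-1/24) (-1/24) (1/12) (-1/8) (1/8)
    β ∈ convexHull ℝ S ∧ ‖β‖ ^ 2 = 1/24 ∧
      ∀ x ∈ convexHull ℝ S, (1/24 : ℝ) ≤ ‖x‖ ^ 2 := by
  intro S β
  refine ⟨?_, ?_, ?_⟩
  · have h1 : vec5 (-2/3) (-2/3) (4/3) (1/2) (-1/2) ∈ convexHull ℝ S :=
      subset_convexHull ℝ S (by simp [S])
    have h3 : vec5 (1/3) (1/3) (-2/3) (-1/2) (1/2) ∈ convexHull ℝ S :=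
      subset_convexHull ℝ S (by simp [S])
    have h := convex_convexHull ℝ S h1 h3 (a := 3/8) (b := 5/8)
      (by norm_num) (by norm_num) (by norm_num)
    convert h using 1
    ext i
    fin_cases i <;> simp [β, vec5] <;> norm_num
  · rw [EuclideanSpace.norm_sq_eq]
    simp [β, vec5, Fin.sum_univ_five]
    norm_num
  · intro x hx
    have hc : Convex ℝ {y : EuclideanSpace ℝ (Fin 5) | (1/24 : ℝ) ≤ inner ℝ β y} :=
      convex_halfSpace_ge (innerₛₗ ℝ β).isLinear _
    have hs : S ⊆ {y : EuclideanSpace ℝ (Fin 5) | (1/24 : ℝ) ≤ inner ℝ β y} := by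
      intro y hy
      simp only [S, Set.mem_insert_iff, Set.mem_singleton_iff] at hy
      rcases hy with rfl | rfl | rfl | rfl <;>
        simp [β, vec5, PiLp.inner_apply, Fin.sum_univ_five] <;> norm_num
    have h : (1/24 : ℝ) ≤ inner ℝ β x := convexHull_min hs hc hx
    have hβ : ‖β‖ ^ 2 = 1/24 := by
      rw [EuclideanSpace.norm_sq_eq]
      simp [β, vec5, Fin.sum_univ_five]
      norm_num
    have h2 := norm_sub_sq_real β x
    nlinarith [sq_nonneg ‖β - x‖]
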